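/- Let (R,B) be an EIC problem with problem graph G=(V,E) in which every requested block is held by some node. Then the minimum over all neighborhood partitions {Ñ_1,…,Ñ_n} of Σ_{i=1}^n χ(Ḡ|_{Ñ_i}) equals the minimum size of a cover of V by neighborhood-cliques, i.e., the minimum cardinality of a subfamily of 𝒞 = {vertex set of C : C is a maximal clique of G|_{N_i} for some i ∈ [n]} whose union is V. -/

import Mathlib

open Matrix BigOperators

namespace EIC

variable {n m : ℕ}

/-- The vertex set of the problem graph of the EIC problem `(R, B)`:
one vertex for each requirement pair `(u, a)` with `R u a = 1`. -/
abbrev Vtx (R : Matrix (Fin n) (Fin m) (ZMod 2)) : Type :=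
  {p : Fin n × Fin m // R p.1 p.2 = 1}

/-- `(R, B)` have disjoint supports: no position has both `B = 1` and `R = 1`. -/
def DisjointSupports (R B : Matrix (Fin n) (Fin m) (ZMod 2)) : Prop :=
  ∀ u a, ¬(B u a = 1 ∧ R u a = 1)

/-- The standard basis vector `e_a ∈ F_2^m`. -/
def e (m : ℕ) (a : Fin m) : Fin m → ZMod 2 := Pi.single a 1

/-- `β` (with rows indexed by `ι`) is a centralized linear broadcast solution to `(R, B)`:
for every requirement pair `(u, a)` there is `α` with `e_a = α · [β ; diag(B_u)]`. -/
def IsCentralizedSolution (R B : Matrix (Fin n) (Fin m) (ZMod 2))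
    {ι : Type} [Fintype ι] (β : Matrix ι (Fin m) (ZMod 2)) : Prop :=
  ∀ u a, R u a = 1 →
    ∃ α : ι ⊕ Fin m → ZMod 2,
      e m a = α ᵥ* Matrix.fromRows β (Matrix.diagonal (B u))

/-- `(C)_{(R,B)}`: the minimum length of a centralized linear broadcast solution. -/
noncomputable def Copt (R B : Matrix (Fin n) (Fin m) (ZMod 2)) : ℕ :=
  sInf {h | ∃ β : Matrix (Fin h) (Fin m) (ZMod 2), IsCentralizedSolution R B β}

/-- The vertical concatenation of the matrices `β u`, `u ∈ [n]`. -/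
def vconcat {h : Fin n → ℕ} (β : ∀ u : Fin n, Matrix (Fin (h u)) (Fin m) (ZMod 2)) :
    Matrix ((ℓ : Fin n) × Fin (h ℓ)) (Fin m) (ZMod 2) :=
  Matrix.of fun p => β p.1 p.2

/-- `β⁽¹⁾, …, β⁽ⁿ⁾` is a (decentralized) linear broadcast solution to `(R, B)`. -/
def IsBroadcastSolution (R B : Matrix (Fin n) (Fin m) (ZMod 2))
    {h : Fin n → ℕ} (β : ∀ u : Fin n, Matrix (Fin (h u)) (Fin m) (ZMod 2)) : Prop :=
  (∀ u a, B u a = 0 → ∀ i, β u i a = 0) ∧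
  ∀ u a, R u a = 1 →
    ∃ α : ((ℓ : Fin n) × Fin (h ℓ)) ⊕ Fin m → ZMod 2,
      e m a = α ᵥ* Matrix.fromRows (vconcat β) (Matrix.diagonal (B u))

/-- `(D)_{(R,B)}`: the minimum length of a decentralized linear broadcast solution. -/
noncomputable def Dopt (R B : Matrix (Fin n) (Fin m) (ZMod 2)) : ℕ :=
  sInf {s | ∃ (h : Fin n → ℕ) (β : ∀ u : Fin n, Matrix (Fin (h u)) (Fin m) (ZMod 2)),
    IsBroadcastSolution R B β ∧ ∑ u, h u = s}

/-- A task-based solution: a linear broadcast solution where every requirement pair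
`(u, a)` can be decoded from the broadcast of a single responsible sender `ℓ`. -/
def IsTaskBased (R B : Matrix (Fin n) (Fin m) (ZMod 2))
    {h : Fin n → ℕ} (β : ∀ u : Fin n, Matrix (Fin (h u)) (Fin m) (ZMod 2)) : Prop :=
  IsBroadcastSolution R B β ∧
  ∀ u a, R u a = 1 → ∃ ℓ : Fin n, ∃ α : Fin (h ℓ) ⊕ Fin m → ZMod 2,
    e m a = α ᵥ* Matrix.fromRows (β ℓ) (Matrix.diagonal (B u))

/-- `(T)_{(R,B)}`: the minimum length of a task-based solution. -/
noncomputable def Topt (R B : Matrix (Fin n) (Fin m) (ZMod 2)) : ℕ :=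
  sInf {s | ∃ (h : Fin n → ℕ) (β : ∀ u : Fin n, Matrix (Fin (h u)) (Fin m) (ZMod 2)),
    IsTaskBased R B β ∧ ∑ u, h u = s}

/-- The edge relation of the problem graph: for distinct requirement pairs `(u,a)`, `(w,b)`,
there is an edge from `v_{(u,a)}` to `v_{(w,b)}` iff `B u b = 1` or `a = b`. -/
def probEdge (R B : Matrix (Fin n) (Fin m) (ZMod 2)) (v w : Vtx R) : Prop :=
  v ≠ w ∧ (B v.1.1 w.1.2 = 1 ∨ v.1.2 = w.1.2)

/-- A matrix `A` fits a directed graph with edge relation `E`. -/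
def Fits {V : Type} (E : V → V → Prop) (A : Matrix V V (ZMod 2)) : Prop :=
  (∀ k, A k k = 1) ∧ ∀ k l, k ≠ l → ¬ E k l → A k l = 0

/-- `minrk₂`: the minimum `F₂`-rank of a matrix fitting the graph. -/
noncomputable def minrk {V : Type} [Fintype V] (E : V → V → Prop) : ℕ :=
  sInf {r | ∃ A : Matrix V V (ZMod 2), Fits E A ∧ A.rank = r}

/-- `rminrk₂`: the minimum `F₂`-rank of a matrix in `𝒜` fitting the graph. -/
noncomputable def rminrk {V : Type} [Fintype V] (E : V → V → Prop)
    (𝒜 : Set (Matrix V V (ZMod 2))) : ℕ :=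
  sInf {r | ∃ A ∈ 𝒜, Fits E A ∧ A.rank = r}

/-- The column repetition function `φ_{(R,B)}`: the column of `φ(A)` indexed by
`v_{(u,a)}` is the `a`-th column of `A`. -/
def phi (R : Matrix (Fin n) (Fin m) (ZMod 2))
    (A : Matrix (Vtx R) (Fin m) (ZMod 2)) : Matrix (Vtx R) (Vtx R) (ZMod 2) :=
  Matrix.of fun k v => A k v.1.2

/-- The sender neighborhood `N_u = {v_{(w,b)} ∈ V : B u b = 1}`. -/
def senderNbhd (R B : Matrix (Fin n) (Fin m) (ZMod 2)) (u : Fin n) : Set (Vtx R) :=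
  {v | B u v.1.2 = 1}

/-- A neighborhood partition `{Ñ_1, …, Ñ_n}`. -/
def IsNbhdPartition (R B : Matrix (Fin n) (Fin m) (ZMod 2))
    (N : Fin n → Set (Vtx R)) : Prop :=
  (∀ i, N i ⊆ senderNbhd R B i) ∧
  (∀ i j, i ≠ j → Disjoint (N i) (N j)) ∧
  (⋃ i, N i) = Set.univ

open Classical in
/-- `R^(i)`: the request matrix of the EIC subproblem induced by `Ñ_i`; it has ones
exactly at the requirement pairs whose vertex lies in `Ñ_i`. -/
noncomputable def Rsub (R : Matrix (Fin n) (Fin m) (ZMod 2))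
    (N : Fin n → Set (Vtx R)) (i : Fin n) : Matrix (Fin n) (Fin m) (ZMod 2) :=
  Matrix.of fun u a =>
    if hr : R u a = 1 then (if (⟨(u, a), hr⟩ : Vtx R) ∈ N i then 1 else 0) else 0

open Classical in
/-- `B^(i)`: the has-matrix of the EIC subproblem induced by `Ñ_i`; it agrees with `B`
on the columns of blocks requested in `Ñ_i` and is zero elsewhere. -/
noncomputable def Bsub (R B : Matrix (Fin n) (Fin m) (ZMod 2))
    (N : Fin n → Set (Vtx R)) (i : Fin n) : Matrix (Fin n) (Fin m) (ZMod 2) :=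
  Matrix.of fun u a => if ∃ v ∈ N i, v.1.2 = a then B u a else 0

/-- `Cl` is a clique for the edge relation `E`. -/
def IsClique {V : Type} (E : V → V → Prop) (Cl : Set V) : Prop :=
  ∀ k ∈ Cl, ∀ l ∈ Cl, k ≠ l → E k l

/-- `I` is an independent set for the edge relation `E` (no edge in either direction). -/
def IsIndep {V : Type} (E : V → V → Prop) (I : Set V) : Prop :=
  ∀ k ∈ I, ∀ l ∈ I, k ≠ l → ¬ E k l ∧ ¬ E l k

/-- `χ(Ḡ|_S)`: the minimum number of cliques of the induced subgraph `G|_S`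
needed to partition `S`. -/
noncomputable def cliqueCoverNum {V : Type} (E : V → V → Prop) (S : Set V) : ℕ :=
  sInf {t | ∃ Cl : Fin t → Set V, (∀ i, Cl i ⊆ S) ∧ (∀ i, IsClique E (Cl i)) ∧
    (∀ i j, i ≠ j → Disjoint (Cl i) (Cl j)) ∧ (⋃ i, Cl i) = S}

/-- `χ(G)`: the minimum number of independent sets of `G` needed to partition
its vertex set. -/
noncomputable def chromNum {V : Type} [Fintype V] (E : V → V → Prop) : ℕ :=
  sInf {t | ∃ I : Fin t → Set V, (∀ i, IsIndep E (I i)) ∧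
    (∀ i j, i ≠ j → Disjoint (I i) (I j)) ∧ (⋃ i, I i) = Set.univ}

/-- `ω(Ḡ|_S)`: the maximum size of an independent set of the induced subgraph `G|_S`. -/
noncomputable def indepNum {V : Type} (E : V → V → Prop) (S : Set V) : ℕ :=
  sSup {t | ∃ I ⊆ S, IsIndep E I ∧ I.ncard = t}

/-- The set of neighborhood-cliques: vertex sets of maximal cliques of the induced
subgraphs `G|_{N_i}`, over all senders `i`. -/
def nbhdCliques (R B : Matrix (Fin n) (Fin m) (ZMod 2)) : Set (Set (Vtx R)) :=
  {Cl | ∃ i : Fin n, Cl ⊆ senderNbhd R B i ∧ IsClique (probEdge R B) Cl ∧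
    ∀ Cl', Cl ⊆ Cl' → Cl' ⊆ senderNbhd R B i → IsClique (probEdge R B) Cl' → Cl' = Cl}

/-!
The cliques of optimal clique partitions of the parts, each enlarged to a maximal clique of its
neighborhood, form a cover. Conversely, given a cover, assign every vertex to one clique containing
it and every clique to one neighborhood containing it; the vertices sent to a neighborhood form a
part that is covered by the cliques sent there, and no clique is used for two parts.
-/

theorem exists_isLeast_and_isLeast_of_forall_exists_le {α : Type*}
    [ConditionallyCompleteLinearOrder α] [WellFoundedLT α] {s t : Set α} (hs : s.Nonempty)
    (hst : ∀ x ∈ s, ∃ y ∈ t, y ≤ x) (hts : ∀ y ∈ t, ∃ x ∈ s, x ≤ y) :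
    ∃ k, IsLeast s k ∧ IsLeast t k := by
  obtain ⟨y, hy, -⟩ := hst _ (csInf_mem hs)
  refine ⟨sInf s, isLeast_csInf hs, ?_⟩
  rw [csInf_eq_csInf_of_forall_exists_le hst hts]
  exact isLeast_csInf ⟨y, hy⟩

section CliquePartition

variable {V : Type} {κ : Type*} {E : V → V → Prop} {S : Set V}

/-- A partition of `S` into cliques of `G|_S`, as in the definition of `cliqueCoverNum`. Parts may
be empty. -/
def IsCliquePartition (E : V → V → Prop) (S : Set V) (P : κ → Set V) : Prop :=
  (∀ k, P k ⊆ S) ∧ (∀ k, IsClique E (P k)) ∧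
    (∀ k l, k ≠ l → Disjoint (P k) (P l)) ∧ (⋃ k, P k) = S

theorem IsClique.mono {C D : Set V} (hD : IsClique E D) (hCD : C ⊆ D) : IsClique E C :=
  fun k hk l hl => hD k (hCD hk) l (hCD hl)

theorem isClique_singleton (E : V → V → Prop) (v : V) : IsClique E {v} :=
  fun _ hk _ hl hkl => absurd (hk.trans hl.symm) hkl

theorem exists_isCliquePartition_of_cover [Finite κ] {Q : κ → Set V}
    (hQ : ∀ k, IsClique E (Q k)) (hS : S ⊆ ⋃ k, Q k) :
    ∃ P : Fin (Nat.card κ) → Set V, IsCliquePartition E S P := by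
  let Q' : Fin (Nat.card κ) → Set V := Q ∘ (Finite.equivFin κ).symm
  have hQ' : ⋃ j, Q' j = ⋃ k, Q k := (Finite.equivFin κ).symm.surjective.iUnion_comp Q
  refine ⟨fun j => S ∩ disjointed Q' j, fun _ => Set.inter_subset_left, fun j => ?_,
    fun i j hij => ?_, ?_⟩
  · exact (hQ _).mono (Set.inter_subset_right.trans (disjointed_le Q' j))
  · exact (disjoint_disjointed Q' hij).mono Set.inter_subset_right Set.inter_subset_right
  · rw [← Set.inter_iUnion, iUnion_disjointed, hQ', Set.inter_eq_left.mpr hS]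

theorem cliqueCoverNum_le_card_of_cover [Finite κ] {Q : κ → Set V}
    (hQ : ∀ k, IsClique E (Q k)) (hS : S ⊆ ⋃ k, Q k) : cliqueCoverNum E S ≤ Nat.card κ :=
  Nat.sInf_le (exists_isCliquePartition_of_cover hQ hS)

theorem exists_isCliquePartition_cliqueCoverNum (E : V → V → Prop) (hS : S.Finite) :
    ∃ P : Fin (cliqueCoverNum E S) → Set V, IsCliquePartition E S P := by
  have : Finite S := hS
  have hcover : S ⊆ ⋃ v : S, {(v : V)} := (Set.iUnion_of_singleton_coe S).ge
  exact Nat.sInf_mem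
    (s := {t | ∃ P : Fin t → Set V, IsCliquePartition E S P})
    ⟨_, exists_isCliquePartition_of_cover (fun v : S => isClique_singleton E v) hcover⟩

end CliquePartition

section LocalCliques

variable {V : Type} {ι κ : Type*} {E : V → V → Prop} {S : ι → Set V}

/-- A partition of the whole vertex set whose `i`-th part lies in `S i`: a neighborhood partition
for an arbitrary family `S` in place of the sender neighborhoods. -/
def IsSubordinatePartition (S N : ι → Set V) : Prop :=
  (∀ i, N i ⊆ S i) ∧ (∀ i j, i ≠ j → Disjoint (N i) (N j)) ∧ (⋃ i, N i) = Set.univ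

/-- The maximal cliques of the induced subgraphs `G|_{S i}`: the neighborhood-cliques for an
arbitrary family `S` in place of the sender neighborhoods. -/
def localMaximalCliques (E : V → V → Prop) (S : ι → Set V) : Set (Set V) :=
  {C | ∃ i, Maximal (fun D => D ⊆ S i ∧ IsClique E D) C}

theorem isSubordinatePartition_fibers {f : V → ι} (hf : ∀ v, v ∈ S (f v)) :
    IsSubordinatePartition S (fun i => f ⁻¹' {i}) := by
  refine ⟨?_, fun i j hij => pairwise_disjoint_fiber f hij,
    Set.iUnion_eq_univ_iff.mpr fun v => ⟨f v, rfl⟩⟩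
  rintro _ v rfl
  exact hf v

theorem exists_superset_mem_localMaximalCliques {C : Set V} {i : ι} (hSi : (S i).Finite)
    (hCS : C ⊆ S i) (hC : IsClique E C) : ∃ M ∈ localMaximalCliques E S, C ⊆ M := by
  have hfin : {D | D ⊆ S i ∧ IsClique E D}.Finite := hSi.finite_subsets.subset fun _ hD => hD.1
  obtain ⟨M, hCM, hM⟩ := hfin.exists_le_maximal (show C ∈ _ from ⟨hCS, hC⟩)
  exact ⟨M, ⟨i, hM⟩, hCM⟩

theorem exists_cover_ncard_le_sum_cliqueCoverNum [Finite V] [Fintype ι] (E : V → V → Prop)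
    {N : ι → Set V} (hNS : ∀ i, N i ⊆ S i) (hN : ⋃ i, N i = Set.univ) :
    ∃ F ⊆ localMaximalCliques E S, ⋃₀ F = Set.univ ∧
      F.ncard ≤ ∑ i, cliqueCoverNum E (N i) := by
  choose P hPN hP _ hP_union using
    fun i => exists_isCliquePartition_cliqueCoverNum E (N i).toFinite
  choose M hM hPM using fun i j =>
    exists_superset_mem_localMaximalCliques (S i).toFinite ((hPN i j).trans (hNS i)) (hP i j)
  let enlarged : (Σ i, Fin (cliqueCoverNum E (N i))) → Set V := fun p => M p.1 p.2
  refine ⟨Set.range enlarged, Set.range_subset_iff.mpr fun p => hM p.1 p.2, ?_, ?_⟩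
  · refine Set.eq_univ_of_univ_subset ?_
    calc Set.univ = ⋃ i, ⋃ j, P i j := by simp only [hP_union, hN]
      _ ⊆ ⋃ i, ⋃ j, M i j := Set.iUnion₂_mono hPM
      _ = ⋃₀ Set.range enlarged := by rw [Set.sUnion_range, Set.iUnion_sigma]
  · calc (Set.range enlarged).ncard
        ≤ Nat.card (Σ i, Fin (cliqueCoverNum E (N i))) := Finite.card_range_le enlarged
      _ = ∑ i, cliqueCoverNum E (N i) := by simp only [Nat.card_sigma, Nat.card_fin]

theorem exists_isSubordinatePartition_sum_le_card [Finite κ] [Fintype ι] {Q : κ → Set V}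
    (hQ : ∀ k, IsClique E (Q k)) (hQS : ∀ k, ∃ i, Q k ⊆ S i) (hcover : ⋃ k, Q k = Set.univ) :
    ∃ N, IsSubordinatePartition S N ∧ ∑ i, cliqueCoverNum E (N i) ≤ Nat.card κ := by
  choose nbhd hnbhd using hQS
  choose clique hclique using Set.iUnion_eq_univ_iff.mp hcover
  have hfiber (i : ι) :
      cliqueCoverNum E ((nbhd ∘ clique) ⁻¹' {i}) ≤ Nat.card {k // nbhd k = i} :=
    cliqueCoverNum_le_card_of_cover (fun k => hQ k.1)
      fun v hv => Set.mem_iUnion.mpr ⟨⟨clique v, hv⟩, hclique v⟩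
  refine ⟨_, isSubordinatePartition_fibers (f := nbhd ∘ clique) fun v => hnbhd _ (hclique v), ?_⟩
  calc ∑ i, cliqueCoverNum E ((nbhd ∘ clique) ⁻¹' {i})
      ≤ ∑ i, Nat.card {k // nbhd k = i} := Finset.sum_le_sum fun i _ => hfiber i
    _ = Nat.card κ := by rw [← Nat.card_sigma, Nat.card_congr (Equiv.sigmaFiberEquiv nbhd)]

theorem min_partition_chrom_eq_min_cover_general [Finite V] [Fintype ι] (E : V → V → Prop)
    (hS : ⋃ i, S i = Set.univ) :
    ∃ k, IsLeast {s | ∃ N : ι → Set V, IsSubordinatePartition S N ∧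
        s = ∑ i, cliqueCoverNum E (N i)} k ∧
      IsLeast {t | ∃ F : Set (Set V), F ⊆ localMaximalCliques E S ∧
        ⋃₀ F = Set.univ ∧ F.ncard = t} k := by
  refine exists_isLeast_and_isLeast_of_forall_exists_le ?_ ?_ ?_
  · choose f hf using Set.iUnion_eq_univ_iff.mp hS
    exact ⟨_, _, isSubordinatePartition_fibers hf, rfl⟩
  · rintro _ ⟨N, hN, rfl⟩
    obtain ⟨F, hF, hcover, hle⟩ := exists_cover_ncard_le_sum_cliqueCoverNum E hN.1 hN.2.2
    exact ⟨_, ⟨F, hF, hcover, rfl⟩, hle⟩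
  · rintro _ ⟨F, hF, hcover, rfl⟩
    choose i hi using fun C : F => hF C.2
    obtain ⟨N, hN, hle⟩ := exists_isSubordinatePartition_sum_le_card (fun C => (hi C).prop.2)
      (fun C => ⟨i C, (hi C).prop.1⟩) (Set.sUnion_eq_iUnion ▸ hcover)
    exact ⟨_, ⟨N, hN, rfl⟩, hle.trans_eq (Nat.card_coe_set_eq F)⟩

end LocalCliques

theorem nbhdCliques_eq_localMaximalCliques (R B : Matrix (Fin n) (Fin m) (ZMod 2)) :
    nbhdCliques R B = localMaximalCliques (probEdge R B) (senderNbhd R B) := by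
  ext C
  simp only [nbhdCliques, localMaximalCliques, maximal_subset_iff, Set.mem_ofPred_eq]
  grind

theorem iUnion_senderNbhd_eq_univ {R B : Matrix (Fin n) (Fin m) (ZMod 2)}
    (hheld : ∀ u a, R u a = 1 → ∃ w, B w a = 1) : ⋃ i, senderNbhd R B i = Set.univ :=
  Set.iUnion_eq_univ_iff.mpr fun v => hheld v.1.1 v.1.2 v.2

theorem min_partition_chrom_eq_min_cover {n m : ℕ}
    (R B : Matrix (Fin n) (Fin m) (ZMod 2)) (hdisj : DisjointSupports R B)
    (hheld : ∀ u a, R u a = 1 → ∃ w, B w a = 1) :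
    sInf {s | ∃ N : Fin n → Set (Vtx R), IsNbhdPartition R B N ∧
        s = ∑ i, cliqueCoverNum (probEdge R B) (N i)} =
    sInf {t | ∃ F : Set (Set (Vtx R)), F ⊆ nbhdCliques R B ∧
        ⋃₀ F = Set.univ ∧ F.ncard = t} := by
  obtain ⟨_, hpartition, hcover⟩ :=
    min_partition_chrom_eq_min_cover_general (probEdge R B) (iUnion_senderNbhd_eq_univ hheld)
  rw [nbhdCliques_eq_localMaximalCliques]
  exact hpartition.csInf_eq.trans hcover.csInf_eq.symm

end EIC
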